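/- Let X be a type, p₁, p₂ : X → ℝ, and let κ₁₂, κ₂₁ ∈ [0,1) be real numbers. Define p_q = (p₁ − κ₁₂ * p₂)/(1 − κ₁₂), p_g = (p₂ − κ₂₁ * p₁)/(1 − κ₂₁), f₁ = (1 − κ₁₂)/(1 − κ₁₂*κ₂₁), and f₂ = κ₂₁*(1 − κ₁₂)/(1 − κ₁₂*κ₂₁). Then 0 ≤ f₂ ≤ f₁ ≤ 1, and for every x ∈ X: p₁ x = f₁ * p_q x + (1 − f₁) * p_g x and p₂ x = f₂ * p_q x + (1 − f₂) * p_g x. -/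

import Mathlib

/-!
Put `D = 1 - κ₁₂ κ₂₁` and `f₁ = (1 - κ₁₂) / D`. The fraction of a topic in its own sample cancels
the normalization of that topic, so that `f₁ p_q = D⁻¹ (p₁ - κ₁₂ p₂)`, while the remaining fraction
`1 - f₁` is `κ₁₂` times the fraction obtained by exchanging the samples, so that
`(1 - f₁) p_g = κ₁₂ D⁻¹ (p₂ - κ₂₁ p₁)`. The two add up to `p₁`. Exchanging the samples turns `f₁`
into `1 - f₂`, hence the decomposition of `p₂` is that of `p₁` with the roles exchanged.
-/

section Field

variable {K V : Type*} [Field K] [AddCommGroup V] [Module K V]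

/-- The topic of a sample `p` relative to a sample `q`: what remains of `p` after removing the
proportion `κ` of `q`, renormalized to total weight one. In the application `κ` is the reducibility
factor of `p` by `q`; at `κ = 1` the value is `0`. -/
def topic (κ : K) (p q : V) : V :=
  (1 - κ)⁻¹ • (p - κ • q)

/-- The fraction in a sample `p` of its own topic relative to `q`, where `κ` is the reducibility
factor of `p` by `q` and `κ'` that of `q` by `p`; at `κ * κ' = 1` the value is `0`. -/
def topicFraction (κ κ' : K) : K :=
  (1 - κ) / (1 - κ * κ')

theorem one_sub_topicFraction {κ κ' : K} (hκκ' : 1 - κ * κ' ≠ 0) :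
    1 - topicFraction κ κ' = κ * topicFraction κ' κ := by
  rw [topicFraction, topicFraction, mul_comm κ' κ, one_sub_div hκκ', ← mul_div_assoc]
  ring

theorem topicFraction_smul_topic {κ : K} (hκ : 1 - κ ≠ 0) (κ' : K) (p q : V) :
    topicFraction κ κ' • topic κ p q = (1 - κ * κ')⁻¹ • (p - κ • q) := by
  rw [topicFraction, topic, smul_smul, div_mul_eq_mul_div, mul_inv_cancel₀ hκ, one_div]

theorem topicFraction_smul_topic_add {κ κ' : K} (hκ : 1 - κ ≠ 0) (hκ' : 1 - κ' ≠ 0)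
    (hκκ' : 1 - κ * κ' ≠ 0) (p q : V) :
    topicFraction κ κ' • topic κ p q + (1 - topicFraction κ κ') • topic κ' q p = p :=
  calc
    _ = (1 - κ * κ')⁻¹ • (p - κ • q) + κ • (1 - κ * κ')⁻¹ • (q - κ' • p) := by
      rw [one_sub_topicFraction hκκ', mul_smul, topicFraction_smul_topic hκ,
        topicFraction_smul_topic hκ', mul_comm κ' κ]
    _ = (1 - κ * κ')⁻¹ • (1 - κ * κ') • p := by module
    _ = p := inv_smul_smul₀ hκκ' p

end Field

section LinearOrderedField

variable {K : Type*} [Field K] [LinearOrder K] [IsStrictOrderedRing K] {κ κ' : K}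

theorem topicFraction_nonneg (hκ : κ ≤ 1) (hκκ' : κ * κ' ≤ 1) : 0 ≤ topicFraction κ κ' :=
  div_nonneg (sub_nonneg.2 hκ) (sub_nonneg.2 hκκ')

theorem topicFraction_le_one (hκ : 0 ≤ κ) (hκ' : κ' ≤ 1) (hκκ' : κ * κ' ≤ 1) :
    topicFraction κ κ' ≤ 1 :=
  div_le_one_of_le₀ (sub_le_sub_left (mul_le_of_le_one_right hκ hκ') 1) (sub_nonneg.2 hκκ')

end LinearOrderedField

theorem samples_are_mixtures_of_topics_general {K V : Type*} [Field K] [LinearOrder K]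
    [IsStrictOrderedRing K] [AddCommGroup V] [Module K V] (p₁ p₂ : V) {κ₁₂ κ₂₁ : K}
    (h12 : κ₁₂ ∈ Set.Ico (0 : K) 1) (h21 : κ₂₁ ∈ Set.Ico (0 : K) 1) :
    let pq : V := topic κ₁₂ p₁ p₂
    let pg : V := topic κ₂₁ p₂ p₁
    let f₁ : K := topicFraction κ₁₂ κ₂₁
    let f₂ : K := κ₂₁ * topicFraction κ₁₂ κ₂₁
    0 ≤ f₂ ∧ f₂ ≤ f₁ ∧ f₁ ≤ 1 ∧
      p₁ = f₁ • pq + (1 - f₁) • pg ∧ p₂ = f₂ • pq + (1 - f₂) • pg := by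
  intro pq pg f₁ f₂
  have hκ₁₂ : 1 - κ₁₂ ≠ 0 := (sub_pos.2 h12.2).ne'
  have hκ₂₁ : 1 - κ₂₁ ≠ 0 := (sub_pos.2 h21.2).ne'
  have hlt : κ₁₂ * κ₂₁ < 1 := mul_lt_one_of_nonneg_of_lt_one_left h12.1 h12.2 h21.2.le
  have hD : 1 - κ₁₂ * κ₂₁ ≠ 0 := (sub_pos.2 hlt).ne'
  have hD' : 1 - κ₂₁ * κ₁₂ ≠ 0 := by rwa [mul_comm]
  have hf₁ : 0 ≤ f₁ := topicFraction_nonneg h12.2.le hlt.le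
  have hf₂ : f₂ = 1 - topicFraction κ₂₁ κ₁₂ := (one_sub_topicFraction hD').symm
  refine ⟨mul_nonneg h21.1 hf₁, mul_le_of_le_one_left hf₁ h21.2.le,
    topicFraction_le_one h12.1 h21.2.le hlt.le,
    (topicFraction_smul_topic_add hκ₁₂ hκ₂₁ hD p₁ p₂).symm, ?_⟩
  rw [hf₂, sub_sub_cancel, add_comm]
  exact (topicFraction_smul_topic_add hκ₂₁ hκ₁₂ hD' p₂ p₁).symm

/-- The operationally defined quark and gluon distributions make the two samples
statistical mixtures with quark fractions `f₁ = (1-κ₁₂)/(1-κ₁₂κ₂₁)` and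
`f₂ = κ₂₁(1-κ₁₂)/(1-κ₁₂κ₂₁)`. -/
theorem samples_are_mixtures_of_topics
    {X : Type*} (p₁ p₂ : X → ℝ) (κ₁₂ κ₂₁ : ℝ)
    (h12 : κ₁₂ ∈ Set.Ico (0 : ℝ) 1) (h21 : κ₂₁ ∈ Set.Ico (0 : ℝ) 1) :
    let pq : X → ℝ := fun x => (p₁ x - κ₁₂ * p₂ x) / (1 - κ₁₂)
    let pg : X → ℝ := fun x => (p₂ x - κ₂₁ * p₁ x) / (1 - κ₂₁)
    let f₁ : ℝ := (1 - κ₁₂) / (1 - κ₁₂ * κ₂₁)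
    let f₂ : ℝ := κ₂₁ * (1 - κ₁₂) / (1 - κ₁₂ * κ₂₁)
    0 ≤ f₂ ∧ f₂ ≤ f₁ ∧ f₁ ≤ 1 ∧
      ∀ x : X, p₁ x = f₁ * pq x + (1 - f₁) * pg x ∧
        p₂ x = f₂ * pq x + (1 - f₂) * pg x := by
  simpa only [topic, topicFraction, funext_iff, Pi.add_apply, Pi.sub_apply, Pi.smul_apply,
    smul_eq_mul, inv_mul_eq_div, ← mul_div_assoc, forall_and]
    using samples_are_mixtures_of_topics_general p₁ p₂ h12 h21
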